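/- Let 2 ≤ N ≤ 4, 1 < R < ∞, Ω = B(0,R) \ closure(B(0,1)) ⊂ ℝ^N, and let w : (1,R) → [0,∞) satisfy ∫₁^R w(r) dr < ∞. Then there is a constant C (depending on N, R, w only through ∫₁^R r^{N+1}(∫₁^r t^{1-N}dt) w(r) dr) such that ∫_Ω w(|x|) u² dx ≤ C ∫_Ω |Δu|² dx for all u ∈ C_c^∞(Ω). -/

import Mathlib

open MeasureTheory Set
open scoped ENNReal

/-- The (pointwise) Laplacian `Δu(x) = ∑ i ∂²u/∂x_i²(x)`. -/
noncomputable def lap {N : ℕ} (u : EuclideanSpace ℝ (Fin N) → ℝ)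
    (x : EuclideanSpace ℝ (Fin N)) : ℝ :=
  ∑ i : Fin N, iteratedFDeriv ℝ 2 u x ![EuclideanSpace.single i 1, EuclideanSpace.single i 1]

section hess
variable {E : Type*} [NormedAddCommGroup E] [NormedSpace ℝ E]

/-- Directional derivative. -/
noncomputable def dirD (v : E) (u : E → ℝ) : E → ℝ := fun x => fderiv ℝ u x v

lemma dirD_smooth (v : E) {u : E → ℝ} (hu : ContDiff ℝ (⊤ : ℕ∞) u) :
    ContDiff ℝ (⊤ : ℕ∞) (dirD v u) := by
  unfold dirD
  exact (hu.fderiv_right (m := (⊤ : ℕ∞)) (by simp)).clm_apply contDiff_const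

lemma dirD_supp (v : E) {u : E → ℝ} (hu : HasCompactSupport u) :
    HasCompactSupport (dirD v u) := hu.fderiv_apply ℝ v

lemma dirD_dirD (v w : E) {u : E → ℝ} (hu : ContDiff ℝ (⊤ : ℕ∞) u) (x : E) :
    dirD v (dirD w u) x = fderiv ℝ (fderiv ℝ u) x v w := by
  unfold dirD
  have h : DifferentiableAt ℝ (fderiv ℝ u) x :=
    (hu.fderiv_right (m := (⊤ : ℕ∞)) (by simp)).differentiable (by simp) x
  rw [fderiv_clm_apply h (differentiableAt_const w)]
  simp

lemma dirD_comm (v w : E) {u : E → ℝ} (hu : ContDiff ℝ (⊤ : ℕ∞) u) :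
    dirD v (dirD w u) = dirD w (dirD v u) := by
  ext x
  rw [dirD_dirD v w hu, dirD_dirD w v hu]
  have : IsSymmSndFDerivAt ℝ u x := hu.contDiffAt.isSymmSndFDerivAt (by
    simp only [minSmoothness_of_isRCLikeNormedField]
    exact WithTop.coe_le_coe.2 le_top)
  exact this v w

variable [FiniteDimensional ℝ E] [MeasurableSpace E] [BorelSpace E]
  (μ : Measure E) [μ.IsAddHaarMeasure]

lemma int_mul {f g : E → ℝ} (hf : Continuous f) (hg : Continuous g) (hs : HasCompactSupport f) :
    Integrable (fun x => f x * g x) μ :=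
  (hf.mul hg).integrable_of_hasCompactSupport hs.mul_right

lemma dirD_ibp (v : E) {f g : E → ℝ} (hf : ContDiff ℝ (⊤ : ℕ∞) f) (hg : ContDiff ℝ (⊤ : ℕ∞) g)
    (hs : HasCompactSupport f) :
    ∫ x, f x * dirD v g x ∂μ = - ∫ x, dirD v f x * g x ∂μ := by
  have := integral_mul_fderiv_eq_neg_fderiv_mul_of_integrable (μ := μ) (f := f) (g := g) (v := v)
    (int_mul μ (dirD_smooth v hf).continuous hg.continuous (dirD_supp v hs))
    (int_mul μ hf.continuous (dirD_smooth v hg).continuous hs)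
    (int_mul μ hf.continuous hg.continuous hs)
    (fun x _ => hf.differentiable (by simp) x) (fun x _ => hg.differentiable (by simp) x)
  exact this

lemma dirD_hess (v w : E) {u : E → ℝ} (hu : ContDiff ℝ (⊤ : ℕ∞) u) (hs : HasCompactSupport u) :
    ∫ x, dirD v (dirD v u) x * dirD w (dirD w u) x ∂μ =
      ∫ x, (dirD v (dirD w u) x) ^ 2 ∂μ := by
  have h1 := dirD_ibp μ v (dirD_smooth v hu) (dirD_smooth w (dirD_smooth w hu)) (dirD_supp v hs)
  have h2 := dirD_ibp μ w (dirD_smooth v hu) (dirD_smooth v (dirD_smooth w hu)) (dirD_supp v hs)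
  have h3 : dirD v (dirD w (dirD w u)) = dirD w (dirD v (dirD w u)) :=
    dirD_comm v w (dirD_smooth w hu)
  rw [h3, h2] at h1
  have h4 := neg_injective h1
  rw [← h4]
  rw [dirD_comm w v hu]
  simp [sq]

end hess

lemma lap_eq {N : ℕ} {u : EuclideanSpace ℝ (Fin N) → ℝ} (hu : ContDiff ℝ (⊤ : ℕ∞) u) (x) :
    lap u x = ∑ i : Fin N, dirD (EuclideanSpace.single i 1) (dirD (EuclideanSpace.single i 1) u) x := by
  unfold lap
  refine Finset.sum_congr rfl fun i _ => ?_
  rw [dirD_dirD _ _ hu, iteratedFDeriv_two_apply]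
  simp

lemma lap_hess {N : ℕ} {u : EuclideanSpace ℝ (Fin N) → ℝ} (hu : ContDiff ℝ (⊤ : ℕ∞) u)
    (hs : HasCompactSupport u) :
    ∫ x, (lap u x) ^ 2 = ∫ x, ∑ i : Fin N, ∑ j : Fin N,
      (dirD (EuclideanSpace.single i 1) (dirD (EuclideanSpace.single j 1) u) x) ^ 2 := by
  have hS : ∀ v w, ContDiff ℝ (⊤ : ℕ∞) (dirD v (dirD w u)) :=
    fun v w => dirD_smooth v (dirD_smooth w hu)
  have hC : ∀ v w, HasCompactSupport (dirD v (dirD w u)) :=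
    fun v w => dirD_supp v (dirD_supp w hs)
  have hI : ∀ v w v' w', Integrable (fun x => dirD v (dirD w u) x * dirD v' (dirD w' u) x) :=
    fun v w v' w' => int_mul _ (hS _ _).continuous (hS _ _).continuous (hC _ _)
  simp_rw [lap_eq hu, sq, Finset.sum_mul_sum]
  rw [integral_finsetSum _ fun i _ => integrable_finsetSum _ fun j _ => hI _ _ _ _,
    integral_finsetSum _ fun i _ => integrable_finsetSum _ fun j _ => hI _ _ _ _]
  refine Finset.sum_congr rfl fun i _ => ?_
  rw [integral_finsetSum _ fun j _ => hI _ _ _ _, integral_finsetSum _ fun j _ => hI _ _ _ _]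
  refine Finset.sum_congr rfl fun j _ => ?_
  rw [dirD_hess _ _ _ hu hs]
  simp [sq]

lemma hess_cs {N : ℕ} {u : EuclideanSpace ℝ (Fin N) → ℝ} (hu : ContDiff ℝ (⊤ : ℕ∞) u)
    (v x : EuclideanSpace ℝ (Fin N)) (hv : ‖v‖ = 1) :
    (dirD v (dirD v u) x) ^ 2 ≤ ∑ i : Fin N, ∑ j : Fin N,
      (dirD (EuclideanSpace.single i 1) (dirD (EuclideanSpace.single j 1) u) x) ^ 2 := by
  have hsum : v = ∑ i, v i • EuclideanSpace.single i (1 : ℝ) := by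
    ext k
    simp [Finset.sum_apply, Pi.single_apply]
  have hn : ∑ i, v i ^ 2 = 1 := by
    rw [← EuclideanSpace.real_norm_sq_eq, hv]; norm_num
  simp_rw [dirD_dirD _ _ hu]
  set B := fderiv ℝ (fderiv ℝ u) x
  have h1 : B v v = ∑ i, v i * ∑ j, v j * B (EuclideanSpace.single i 1) (EuclideanSpace.single j 1) := by
    conv_lhs => rw [hsum]
    simp [map_sum, Finset.mul_sum]
    try { rw [Finset.sum_comm]; simp [mul_left_comm] }
  rw [h1]
  refine (Finset.sum_mul_sq_le_sq_mul_sq _ _ _).trans ?_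
  rw [hn, one_mul]
  refine Finset.sum_le_sum fun i _ => ?_
  refine (Finset.sum_mul_sq_le_sq_mul_sq _ _ _).trans ?_
  rw [hn, one_mul]

lemma oneD_cs (N : ℕ) (s : ℝ) (hs : 1 ≤ s) (h : ℝ → ℝ) (hh : Continuous h) (hN : 1 ≤ N) :
    (∫ t in (1:ℝ)..s, h t) ^ 2 ≤ (∫ t in (1:ℝ)..s, t ^ ((1:ℝ) - N)) *
      ∫ t in (1:ℝ)..s, t ^ (N - 1) * h t ^ 2 := by
  have hpc : ContinuousOn (fun t : ℝ => t ^ ((1:ℝ) - N)) (uIcc 1 s) := by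
    intro t ht
    rw [uIcc_of_le hs] at ht
    exact (Real.continuousAt_rpow_const t _ (Or.inl (by linarith [ht.1]))).continuousWithinAt
  have hpI : IntervalIntegrable (fun t : ℝ => t ^ ((1:ℝ) - N)) volume 1 s := hpc.intervalIntegrable
  have hqI : IntervalIntegrable (fun t : ℝ => t ^ (N - 1) * h t ^ 2) volume 1 s :=
    Continuous.intervalIntegrable (by fun_prop) _ _
  have hhI : IntervalIntegrable h volume 1 s := hh.intervalIntegrable _ _
  have key : ∀ c : ℝ, 0 ≤ (∫ t in (1:ℝ)..s, t ^ ((1:ℝ) - N)) * (c * c)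
      + (2 * ∫ t in (1:ℝ)..s, h t) * c + ∫ t in (1:ℝ)..s, t ^ (N - 1) * h t ^ 2 := by
    intro c
    have e : (∫ t in (1:ℝ)..s, t ^ ((1:ℝ) - N)) * (c * c)
      + (2 * ∫ t in (1:ℝ)..s, h t) * c + ∫ t in (1:ℝ)..s, t ^ (N - 1) * h t ^ 2
      = ∫ t in (1:ℝ)..s, (t ^ ((1:ℝ) - N) * (c * c) + (2 * h t) * c + t ^ (N - 1) * h t ^ 2) := by
      rw [intervalIntegral.integral_add ((hpI.mul_const _).add ((hhI.const_mul _).mul_const _)) hqI,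
        intervalIntegral.integral_add (hpI.mul_const _) ((hhI.const_mul _).mul_const _),
        intervalIntegral.integral_mul_const, intervalIntegral.integral_mul_const,
        intervalIntegral.integral_const_mul]
    rw [e]
    refine intervalIntegral.integral_nonneg hs fun t ht => ?_
    have ht0 : 0 < t := by linarith [ht.1]
    have hp : t ^ ((1:ℝ) - N) = (t ^ (N - 1))⁻¹ := by
      rw [← Real.rpow_natCast, ← Real.rpow_neg ht0.le]
      congr 1
      push_cast [Nat.cast_sub hN]; ring
    rw [hp]
    have hq : 0 < t ^ (N - 1) := by positivity
    have : (t ^ (N - 1))⁻¹ * (c * c) + (2 * h t) * c + t ^ (N - 1) * h t ^ 2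
      = (t ^ (N - 1))⁻¹ * (c + t ^ (N - 1) * h t) ^ 2 := by field_simp; ring
    rw [this]; positivity
  have := discrim_le_zero key
  unfold discrim at this
  nlinarith

lemma oneD (N : ℕ) (hN : 1 ≤ N) (R r : ℝ) (hr : 1 < r) (hrR : r < R) (f g h : ℝ → ℝ)
    (hf : ∀ t, HasDerivAt f (g t) t) (hg : ∀ t, HasDerivAt g (h t) t) (hh : Continuous h)
    (f1 : f 1 = 0) (g1 : g 1 = 0) :
    f r ^ 2 ≤ r ^ 2 * (∫ t in Ioo (1:ℝ) r, t ^ ((1:ℝ) - N)) *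
      ∫ t in Ioo (1:ℝ) R, t ^ (N - 1) * h t ^ 2 := by
  have eP : (∫ t in Ioo (1:ℝ) r, t ^ ((1:ℝ) - N)) = ∫ t in (1:ℝ)..r, t ^ ((1:ℝ) - N) := by
    rw [intervalIntegral.integral_of_le hr.le, integral_Ioc_eq_integral_Ioo]
  have eQ : (∫ t in Ioo (1:ℝ) R, t ^ (N - 1) * h t ^ 2)
      = ∫ t in (1:ℝ)..R, t ^ (N - 1) * h t ^ 2 := by
    rw [intervalIntegral.integral_of_le (by linarith), integral_Ioc_eq_integral_Ioo]
  rw [eP, eQ]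
  set P := ∫ t in (1:ℝ)..r, t ^ ((1:ℝ) - N) with hP
  set Q := ∫ t in (1:ℝ)..R, t ^ (N - 1) * h t ^ 2 with hQ
  have hpI : ∀ a, 1 ≤ a → IntervalIntegrable (fun t : ℝ => t ^ ((1:ℝ) - N)) volume 1 a := by
    intro a ha
    refine ContinuousOn.intervalIntegrable ?_
    intro t ht
    rw [uIcc_of_le ha] at ht
    exact (Real.continuousAt_rpow_const t _ (Or.inl (by linarith [ht.1]))).continuousWithinAt
  have hqI : ∀ a b, IntervalIntegrable (fun t : ℝ => t ^ (N - 1) * h t ^ 2) volume a b :=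
    fun a b => Continuous.intervalIntegrable (by fun_prop) _ _
  have hP0 : 0 ≤ P := intervalIntegral.integral_nonneg hr.le fun t ht =>
    Real.rpow_nonneg (by linarith [ht.1]) _
  have hQ0 : 0 ≤ Q := intervalIntegral.integral_nonneg (by linarith) fun t ht => by
    have : 0 ≤ t := by linarith [ht.1]
    positivity
  have hgb : ∀ s ∈ Ico (1:ℝ) r, ‖g s‖ ≤ Real.sqrt (P * Q) := by
    intro s hs
    have h1 : ∫ t in (1:ℝ)..s, h t = g s := by
      rw [intervalIntegral.integral_eq_sub_of_hasDerivAt (fun t _ => hg t)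
        (hh.intervalIntegrable _ _), g1, sub_zero]
    have h2 := oneD_cs N s hs.1 h hh hN
    rw [h1] at h2
    have h3 : (∫ t in (1:ℝ)..s, t ^ ((1:ℝ) - N)) ≤ P := by
      refine intervalIntegral.integral_mono_interval le_rfl hs.1 hs.2.le ?_ (hpI r hr.le)
      filter_upwards [ae_restrict_mem measurableSet_Ioc] with t ht
      exact Real.rpow_nonneg (by linarith [ht.1]) _
    have h4 : (∫ t in (1:ℝ)..s, t ^ (N - 1) * h t ^ 2) ≤ Q := by
      refine intervalIntegral.integral_mono_interval le_rfl hs.1 (by linarith [hs.2]) ?_ (hqI 1 R)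
      filter_upwards [ae_restrict_mem measurableSet_Ioc] with t ht
      have : 0 ≤ t := by linarith [ht.1]
      simp only [Pi.zero_apply]
      positivity
    have h5 : 0 ≤ ∫ t in (1:ℝ)..s, t ^ (N - 1) * h t ^ 2 :=
      intervalIntegral.integral_nonneg hs.1 fun t ht => by
        have : 0 ≤ t := by linarith [ht.1]
        positivity
    rw [Real.norm_eq_abs]
    exact Real.abs_le_sqrt (h2.trans (mul_le_mul h3 h4 h5 hP0))
  have hm := norm_image_sub_le_of_norm_deriv_le_segment' (f := f) (f' := g) (a := 1) (b := r)
    (fun t _ => (hf t).hasDerivWithinAt) hgb r ⟨hr.le, le_rfl⟩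
  rw [f1, sub_zero, Real.norm_eq_abs] at hm
  have hb : |f r| ≤ Real.sqrt (P * Q) * r := hm.trans (by gcongr; linarith)
  have := pow_le_pow_left₀ (abs_nonneg _) hb 2
  rw [sq_abs, mul_pow, Real.sq_sqrt (mul_nonneg hP0 hQ0)] at this
  linarith

lemma polar_annulus {E : Type*} [NormedAddCommGroup E] [NormedSpace ℝ E] [FiniteDimensional ℝ E]
    [Nontrivial E] [MeasurableSpace E] [BorelSpace E] (μ : Measure E) [μ.IsAddHaarMeasure]
    (N : ℕ) (hN : Module.finrank ℝ E = N) (R : ℝ) (F : E → ℝ≥0∞) (hF : Measurable F) :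
    ∫⁻ x in Metric.ball (0 : E) R \ Metric.closedBall (0 : E) 1, F x ∂μ =
    ∫⁻ ω, (∫⁻ r in Ioo (1:ℝ) R, ENNReal.ofReal (r ^ (N - 1)) * F (r • (ω : E)))
      ∂(μ.toSphere) := by
  set A : Set E := Metric.ball (0 : E) R \ Metric.closedBall (0 : E) 1 with hA
  have mA : MeasurableSet A := measurableSet_ball.diff measurableSet_closedBall
  have mG : Measurable (A.indicator F) := hF.indicator mA
  have h0 : ∫⁻ x, A.indicator F x ∂μ
      = ∫⁻ x : ({0}ᶜ : Set E), A.indicator F x.1 ∂(μ.comap Subtype.val) := by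
    rw [lintegral_subtype_comap (measurableSet_singleton _).compl, restrict_compl_singleton]
  rw [← lintegral_indicator mA, h0]
  have h1 := μ.measurePreserving_homeomorphUnitSphereProd.lintegral_comp_emb
    (Homeomorph.measurableEmbedding _) (fun p => A.indicator F (p.2.1 • p.1.1))
  have h2 : ∀ x : ({0}ᶜ : Set E), ((homeomorphUnitSphereProd E x).2.1 •
      (homeomorphUnitSphereProd E x).1.1) = x.1 := by
    intro x
    have : ‖x.1‖ ≠ 0 := norm_ne_zero_iff.2 x.2
    simp [smul_smul, this]
  simp only [h2] at h1
  rw [h1, lintegral_prod]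
  swap
  · exact (mG.comp (by fun_prop)).aemeasurable
  refine lintegral_congr fun ω => ?_
  unfold Measure.volumeIoiPow
  have hm : Measurable (fun y : Ioi (0:ℝ) => A.indicator F (y.1 • ω.1)) := mG.comp (by fun_prop)
  dsimp only
  rw [lintegral_withDensity_eq_lintegral_mul _ (by fun_prop) hm]
  have h3 := lintegral_subtype_comap (μ := (volume : Measure ℝ)) (measurableSet_Ioi (a := (0:ℝ)))
    (fun r => ENNReal.ofReal (r ^ (N - 1)) * A.indicator F (r • ω.1))
  simp only [Pi.mul_apply, Function.comp_def, hN]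
  refine h3.trans ?_
  rw [← lintegral_indicator measurableSet_Ioi, ← lintegral_indicator measurableSet_Ioo]
  refine lintegral_congr fun r => ?_
  have hω : ‖ω.1‖ = 1 := by simpa using ω.2
  by_cases hr : r ∈ Ioo (1:ℝ) R
  · have : r • ω.1 ∈ A := by
      have h0 : 0 < r := by linarith [hr.1]
      simp [hA, norm_smul, hω, abs_of_pos h0, hr.1, hr.2]
    rw [indicator_of_mem hr, indicator_of_mem (by simp; linarith [hr.1]), indicator_of_mem this]
  · rw [indicator_of_notMem hr]
    by_cases h0 : r ∈ Ioi (0:ℝ)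
    · rw [indicator_of_mem h0, indicator_of_notMem, mul_zero]
      intro h
      apply hr
      simp [hA, norm_smul, hω, abs_of_pos h0.out] at h
      exact ⟨h.2, h.1⟩
    · rw [indicator_of_notMem h0]

lemma k_mono (N : ℕ) : Monotone (fun r : ℝ => ∫ t in Ioo (1:ℝ) r, t ^ ((1:ℝ) - N)) := by
  intro a b hab
  refine setIntegral_mono_set ?_ ?_ (Filter.Eventually.of_forall (Ioo_subset_Ioo_right hab))
  · refine (ContinuousOn.integrableOn_Icc (a := 1) (b := b) ?_).mono_set Ioo_subset_Icc_self
    intro t ht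
    exact (Real.continuousAt_rpow_const t _ (Or.inl (by linarith [ht.1]))).continuousWithinAt
  · filter_upwards [ae_restrict_mem measurableSet_Ioo] with t ht
    exact Real.rpow_nonneg (by linarith [ht.1]) _

lemma k_nonneg (N : ℕ) (r : ℝ) : 0 ≤ ∫ t in Ioo (1:ℝ) r, t ^ ((1:ℝ) - N) :=
  setIntegral_nonneg measurableSet_Ioo fun t ht => Real.rpow_nonneg (by linarith [ht.1]) _

theorem annulus_aux (N : ℕ) (hN2 : 2 ≤ N) (R : ℝ) (hR : 1 < R)
    (w : ℝ → ℝ) (hw : Measurable w) (hw0 : ∀ r, 1 < r → r < R → 0 ≤ w r)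
    (hInt : IntegrableOn w (Ioo (1 : ℝ) R))
    (u : EuclideanSpace ℝ (Fin N) → ℝ) (hu : ContDiff ℝ (⊤ : ℕ∞) u) (hs : HasCompactSupport u)
    (hsu : tsupport u ⊆
          Metric.ball (0 : EuclideanSpace ℝ (Fin N)) R \
            Metric.closedBall (0 : EuclideanSpace ℝ (Fin N)) 1) :
        ∫⁻ x in Metric.ball (0 : EuclideanSpace ℝ (Fin N)) R \
              Metric.closedBall (0 : EuclideanSpace ℝ (Fin N)) 1,
            ENNReal.ofReal (w ‖x‖ * u x ^ 2)
          ≤ ENNReal.ofReal (∫ r in Ioo (1 : ℝ) R,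
              r ^ (N + 1) * (∫ t in Ioo (1 : ℝ) r, t ^ ((1 : ℝ) - N)) * w r) *
            ∫⁻ x in Metric.ball (0 : EuclideanSpace ℝ (Fin N)) R \
                Metric.closedBall (0 : EuclideanSpace ℝ (Fin N)) 1,
              ENNReal.ofReal ((lap u x) ^ 2) := by
  have : Nonempty (Fin N) := ⟨⟨0, by omega⟩⟩
  have hcont : ∀ v w, Continuous (dirD v (dirD w u)) :=
    fun v w => (dirD_smooth v (dirD_smooth w hu)).continuous
  have hcs : ∀ v w, HasCompactSupport (dirD v (dirD w u)) :=
    fun v w => dirD_supp v (dirD_supp w hs)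
  obtain ⟨S, hS⟩ : ∃ S : EuclideanSpace ℝ (Fin N) → ℝ, S = fun x => ∑ i : Fin N, ∑ j : Fin N,
      (dirD (EuclideanSpace.single i 1) (dirD (EuclideanSpace.single j 1) u) x) ^ 2 := ⟨_, rfl⟩
  have hScont : Continuous S := by
    rw [hS]
    exact continuous_finsetSum _ fun i _ => continuous_finsetSum _ fun j _ => (hcont _ _).pow 2
  have hS0 : ∀ x, 0 ≤ S x := fun x => by
    rw [hS]; exact Finset.sum_nonneg fun i _ => Finset.sum_nonneg fun j _ => sq_nonneg _
  have hSI : Integrable S := by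
    rw [hS]
    refine integrable_finsetSum _ fun i _ => integrable_finsetSum _ fun j _ => ?_
    simpa [sq] using int_mul volume (hcont (EuclideanSpace.single i 1) (EuclideanSpace.single j 1))
      (hcont (EuclideanSpace.single i 1) (EuclideanSpace.single j 1)) (hcs _ _)
  have hSle : ∀ v x, ‖v‖ = 1 → (dirD v (dirD v u) x) ^ 2 ≤ S x := fun v x hv => by
    rw [hS]; exact hess_cs hu v x hv
  have hlapc : Continuous (lap u) := by
    have : lap u = fun x => ∑ i : Fin N,
      dirD (EuclideanSpace.single i 1) (dirD (EuclideanSpace.single i 1) u) x := funext (lap_eq hu)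
    rw [this]
    exact continuous_finsetSum _ fun i _ => hcont _ _
  have hlaps : ∀ x, x ∉ tsupport u → lap u x = 0 := by
    intro x hx
    rw [lap_eq hu]
    refine Finset.sum_eq_zero fun i _ => ?_
    rw [dirD_dirD _ _ hu]
    have h1 : x ∉ tsupport (fderiv ℝ (fderiv ℝ u)) := fun h =>
      hx (tsupport_fderiv_subset ℝ (tsupport_fderiv_subset ℝ h))
    rw [image_eq_zero_of_notMem_tsupport h1]
    simp
  have hlapI : Integrable (fun x => (lap u x) ^ 2) := by
    refine (hlapc.pow 2).integrable_of_hasCompactSupport ?_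
    refine HasCompactSupport.intro hs fun x hx => ?_
    simp [hlaps x hx]
  -- the Hessian inequality
  have hH : ∫⁻ x in Metric.ball (0 : EuclideanSpace ℝ (Fin N)) R \
                Metric.closedBall (0 : EuclideanSpace ℝ (Fin N)) 1, ENNReal.ofReal (S x) ≤
      ∫⁻ x in Metric.ball (0 : EuclideanSpace ℝ (Fin N)) R \
                Metric.closedBall (0 : EuclideanSpace ℝ (Fin N)) 1,
              ENNReal.ofReal ((lap u x) ^ 2) := by
    have e1 : ∫⁻ x in Metric.ball (0 : EuclideanSpace ℝ (Fin N)) R \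
                Metric.closedBall (0 : EuclideanSpace ℝ (Fin N)) 1,
              ENNReal.ofReal ((lap u x) ^ 2) = ∫⁻ x, ENNReal.ofReal ((lap u x) ^ 2) := by
      refine setLIntegral_eq_of_support_subset ?_
      intro x hx
      by_contra hx'
      apply hx
      simp [hlaps x fun h => hx' (hsu h)]
    rw [e1]
    refine (setLIntegral_le_lintegral _ _).trans ?_
    rw [← ofReal_integral_eq_lintegral_ofReal hSI (Filter.Eventually.of_forall hS0),
      ← ofReal_integral_eq_lintegral_ofReal hlapI (Filter.Eventually.of_forall fun x => sq_nonneg _),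
      lap_hess hu hs, hS]
  refine le_trans ?_ (mul_le_mul_right hH _)
  rw [polar_annulus volume N (by simp) R _ (by
      have := hu.continuous.measurable
      fun_prop), polar_annulus volume N (by simp) R _ (by
      have := hScont.measurable
      fun_prop), ← lintegral_const_mul' _ _ ENNReal.ofReal_ne_top]
  refine lintegral_mono fun ω => ?_
  have hω : ‖ω.1‖ = 1 := by simpa using ω.2
  -- integrability of the constant
  have hkm := (k_mono N).measurable
  have hCI : IntegrableOn (fun r => r ^ (N + 1) * (∫ t in Ioo (1 : ℝ) r, t ^ ((1 : ℝ) - N)) * w r)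
      (Ioo 1 R) := by
    refine Integrable.bdd_mul (c := R ^ (N + 1) * ∫ t in Ioo (1 : ℝ) R, t ^ ((1 : ℝ) - N)) hInt ?_ ?_
    · exact (Measurable.mul (by fun_prop) hkm).aestronglyMeasurable
    · filter_upwards [ae_restrict_mem measurableSet_Ioo] with r hr
      have h0 : 0 < r := by linarith [hr.1]
      rw [Real.norm_eq_abs, abs_of_nonneg (mul_nonneg (by positivity) (k_nonneg N r))]
      exact mul_le_mul (pow_le_pow_left₀ h0.le hr.2.le _) (k_mono N hr.2.le) (k_nonneg N r)
        (by positivity)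
  rw [ofReal_integral_eq_lintegral_ofReal hCI, ← lintegral_mul_const'' _
    hCI.aestronglyMeasurable.aemeasurable.ennreal_ofReal]
  swap
  · filter_upwards [ae_restrict_mem measurableSet_Ioo] with r hr
    have h0 : 0 < r := by linarith [hr.1]
    exact mul_nonneg (mul_nonneg (by positivity) (k_nonneg N r)) (hw0 r hr.1 hr.2)
  refine setLIntegral_mono' measurableSet_Ioo fun r hr => ?_
  have h0 : 0 < r := by linarith [hr.1]
  have hline : ∀ t : ℝ, HasDerivAt (fun s : ℝ => s • ω.1) ω.1 t := fun t => by
    simpa using (hasDerivAt_id t).smul_const ω.1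
  have hder : ∀ (v : EuclideanSpace ℝ (Fin N) → ℝ), ContDiff ℝ (⊤ : ℕ∞) v → ∀ t : ℝ,
      HasDerivAt (fun s : ℝ => v (s • ω.1)) (dirD ω.1 v (t • ω.1)) t := fun v hv t =>
    ((hv.differentiable (by simp) (t • ω.1)).hasFDerivAt).comp_hasDerivAt t (hline t)
  have hnot : (1:ℝ) • ω.1 ∉ tsupport u := fun h => by
    have := (hsu h).2
    simp [hω] at this
  have hhc : Continuous (fun t : ℝ => dirD ω.1 (dirD ω.1 u) (t • ω.1)) :=
    (hcont _ _).comp (by fun_prop)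
  have h1 := oneD N (by omega) R r hr.1 hr.2 _ _ _ (hder u hu) (hder _ (dirD_smooth ω.1 hu))
    hhc (image_eq_zero_of_notMem_tsupport hnot) (by
      have h1 : (1:ℝ) • ω.1 ∉ tsupport (fderiv ℝ u) := fun h => hnot (tsupport_fderiv_subset ℝ h)
      unfold dirD
      rw [image_eq_zero_of_notMem_tsupport h1]
      simp)
  set k := ∫ t in Ioo (1:ℝ) r, t ^ ((1:ℝ) - N) with hk
  set Q := ∫ t in Ioo (1:ℝ) R, t ^ (N - 1) * (dirD ω.1 (dirD ω.1 u) (t • ω.1)) ^ 2 with hQ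
  have hk0 : 0 ≤ k := k_nonneg N r
  have hQI : IntegrableOn (fun t : ℝ => t ^ (N - 1) * (dirD ω.1 (dirD ω.1 u) (t • ω.1)) ^ 2)
      (Ioo 1 R) := by
    refine IntegrableOn.mono_set ?_ Ioo_subset_Icc_self
    exact Continuous.integrableOn_Icc (by fun_prop)
  have hQle : ENNReal.ofReal Q ≤
      ∫⁻ t in Ioo (1:ℝ) R, ENNReal.ofReal (t ^ (N - 1)) * ENNReal.ofReal (S (t • ω.1)) := by
    rw [hQ, ofReal_integral_eq_lintegral_ofReal hQI]
    · refine setLIntegral_mono' measurableSet_Ioo fun t ht => ?_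
      have h0 : 0 < t := by linarith [ht.1]
      rw [← ENNReal.ofReal_mul (by positivity)]
      exact ENNReal.ofReal_le_ofReal (mul_le_mul_of_nonneg_left (hSle _ _ hω) (by positivity))
    · filter_upwards [ae_restrict_mem measurableSet_Ioo] with t ht
      have h0 : 0 < t := by linarith [ht.1]
      simp only [Pi.zero_apply]
      positivity
  refine le_trans ?_ (mul_le_mul_right hQle _)
  have hwr := hw0 r hr.1 hr.2
  have hnr : ‖r • ω.1‖ = r := by rw [norm_smul, hω, mul_one, Real.norm_eq_abs, abs_of_pos h0]
  rw [← ENNReal.ofReal_mul (by positivity), ← ENNReal.ofReal_mul (by positivity), hnr]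
  refine ENNReal.ofReal_le_ofReal ?_
  calc r ^ (N - 1) * (w r * u (r • ω.1) ^ 2) ≤ r ^ (N - 1) * (w r * (r ^ 2 * k * Q)) := by gcongr
    _ = r ^ (N + 1) * k * w r * Q := by
      have : N + 1 = (N - 1) + 2 := by omega
      rw [this, pow_add]; ring

/-- Let `2 ≤ N ≤ 4`, `1 < R < ∞`, `Ω = B(0,R) \ closure B(0,1)` and
`w : (1,R) → [0,∞)` integrable.  Then with the constant
`C = ∫₁^R r^{N+1} (∫₁^r t^{1-N} dt) w(r) dr`, one has
`∫_Ω w(|x|) u² ≤ C ∫_Ω |Δu|²` for every `u ∈ C_c^∞(Ω)`. -/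
theorem annulus_weight_admissible (N : ℕ) (hN2 : 2 ≤ N) (hN4 : N ≤ 4) (R : ℝ) (hR : 1 < R)
    (w : ℝ → ℝ) (hw : Measurable w) (hw0 : ∀ r, 1 < r → r < R → 0 ≤ w r)
    (hInt : IntegrableOn w (Ioo (1 : ℝ) R)) :
    ∃ C : ℝ,
      C = (∫ r in Ioo (1 : ℝ) R,
        r ^ (N + 1) * (∫ t in Ioo (1 : ℝ) r, t ^ ((1 : ℝ) - N)) * w r) ∧
      ∀ u : EuclideanSpace ℝ (Fin N) → ℝ, ContDiff ℝ (⊤ : ℕ∞) u → HasCompactSupport u →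
        tsupport u ⊆
          Metric.ball (0 : EuclideanSpace ℝ (Fin N)) R \
            Metric.closedBall (0 : EuclideanSpace ℝ (Fin N)) 1 →
        ∫⁻ x in Metric.ball (0 : EuclideanSpace ℝ (Fin N)) R \
              Metric.closedBall (0 : EuclideanSpace ℝ (Fin N)) 1,
            ENNReal.ofReal (w ‖x‖ * u x ^ 2)
          ≤ ENNReal.ofReal C *
            ∫⁻ x in Metric.ball (0 : EuclideanSpace ℝ (Fin N)) R \
                Metric.closedBall (0 : EuclideanSpace ℝ (Fin N)) 1,
              ENNReal.ofReal ((lap u x) ^ 2) := by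
  exact ⟨_, rfl, fun u hu hs hsu => annulus_aux N hN2 R hR w hw hw0 hInt u hu hs hsu⟩
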